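/- For every κ ≥ 0 and every sequence of nonempty compact sets Θ_p ⊆ {θ ∈ ℝ^p : ‖θ‖₂ ≤ 1}, one has |ξ⁽¹⁾_{n,ψ,κ}(Θ_p) − (ξ⁽²⁾_{n,ψ,κ}(Θ_p))₊| → 0 in probability as n → ∞ with p/n → ψ. In particular |ξ⁽¹⁾_{n,ψ,κ} − (ξ⁽²⁾_{n,ψ,κ})₊| → 0 in probability (taking Θ_p the full unit ball). -/

import Mathlib

open MeasureTheory ProbabilityTheory Real Filter Set Topology

noncomputable section

namespace MaxMargin

/-- The standard Gaussian measure on `ℝ`. -/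
def stdG : Measure ℝ := gaussianReal 0 1

/-- The function `F_κ(c₁,c₂) = (E[((κ − c₁·Y·G − c₂·Z)₊)²])^{1/2}` where `G, Z` are independent
standard Gaussians and, conditionally on `G`, `Y ∈ {+1,−1}` with `P(Y = +1 | G) = f(G)`. -/
def Fk (f : ℝ → ℝ) (κ c₁ c₂ : ℝ) : ℝ :=
  Real.sqrt (∫ g, ∫ z,
    (f g * (max (κ - c₁ * g - c₂ * z) 0) ^ 2
      + (1 - f g) * (max (κ + c₁ * g - c₂ * z) 0) ^ 2) ∂stdG ∂stdG)

/-- Non-degeneracy of `f`: the variable `T = Y·G` satisfies `P(T < x) > 0` and `P(T > x) > 0`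
for every `x ∈ ℝ`. -/
def NonDeg (f : ℝ → ℝ) : Prop :=
  ∀ x : ℝ,
    (0 < ∫ g, (f g * (if g < x then (1:ℝ) else 0)
          + (1 - f g) * (if -g < x then (1:ℝ) else 0)) ∂stdG) ∧
    (0 < ∫ g, (f g * (if x < g then (1:ℝ) else 0)
          + (1 - f g) * (if x < -g then (1:ℝ) else 0)) ∂stdG)


/-- The Euclidean (ℓ²) norm of a finitely-indexed vector. -/
def l2 {ι : Type*} [Fintype ι] (v : ι → ℝ) : ℝ := Real.sqrt (∑ i, v i ^ 2)

/-- Standard Gaussian measure on `ι → ℝ`. -/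
def stdGaussianPi (ι : Type*) [Fintype ι] : Measure (ι → ℝ) :=
  Measure.pi fun _ : ι => stdG

/-- The law of a `{+1,−1}`-valued variable taking the value `+1` with probability `q`. -/
def signBer (q : ℝ) : Measure ℝ :=
  ENNReal.ofReal q • Measure.dirac (1 : ℝ) + ENNReal.ofReal (1 - q) • Measure.dirac (-1 : ℝ)

/-- Projection of `v` orthogonal to the unit vector `w`: `Π_{w⊥}v = v − ⟨w,v⟩w`. -/
def projv {ι : Type*} [Fintype ι] (w v : ι → ℝ) : ι → ℝ :=
  fun j => v j - (∑ k, w k * v k) * w j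

/-- The dual feasible set `{λ : ‖λ‖₂ ≤ 1, yᵢλᵢ ≥ 0 ∀i}`. -/
def lamSet (n : ℕ) (yv : Fin n → ℝ) : Set (Fin n → ℝ) :=
  {lam : Fin n → ℝ | l2 lam ≤ 1 ∧ ∀ i, 0 ≤ yv i * lam i}

/-- `ξ⁽⁰⁾(Θ)` evaluated at the data `(M, y)`:
`min_{θ∈Θ} max_{‖λ‖≤1, y⊙λ≥0} p^{−1/2}·λᵀ(κy − X̄Λ^{1/2}θ)`. -/
def xi0 (n p : ℕ) (κ : ℝ) (Λ : Fin p → ℝ) (Θ : Set (Fin p → ℝ))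
    (M : Fin n → Fin p → ℝ) (yv : Fin n → ℝ) : ℝ :=
  sInf ((fun θ => sSup ((fun lam => (Real.sqrt (p : ℝ))⁻¹ *
      ∑ i, lam i * (κ * yv i - ∑ j, M i j * Real.sqrt (Λ j) * θ j)) '' lamSet n yv)) '' Θ)

/-- `ξ⁽¹⁾(Θ)` evaluated at `(g, h, u, y)`:
`min_{θ∈Θ} max_{‖λ‖≤1, y⊙λ≥0} p^{−1/2}( λᵀ(κy − ⟨Λ^{1/2}w,θ⟩u − ‖Π_{w⊥}Λ^{1/2}θ‖₂h)
+ ‖λ‖₂·gᵀΠ_{w⊥}Λ^{1/2}θ )`. -/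
def xi1 (n p : ℕ) (κ : ℝ) (Λ w : Fin p → ℝ) (Θ : Set (Fin p → ℝ))
    (g : Fin p → ℝ) (h u yv : Fin n → ℝ) : ℝ :=
  sInf ((fun θ => sSup ((fun lam => (Real.sqrt (p : ℝ))⁻¹ *
      ((∑ i, lam i * (κ * yv i - (∑ j, Real.sqrt (Λ j) * w j * θ j) * u i
          - l2 (projv w (fun j => Real.sqrt (Λ j) * θ j)) * h i))
        + l2 lam * ∑ j, g j * projv w (fun j' => Real.sqrt (Λ j') * θ j') j))
      '' lamSet n yv)) '' Θ)

/-- Joint law of `(X̄, y)` in the primary model: `X̄` has i.i.d. `N(0,1)` entries and,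
conditionally on `X̄`, the labels are independent with `P(yᵢ = +1 | X̄) = f(ρ⟨w, x̄ᵢ⟩)`. -/
def mu0 (n p : ℕ) (f : ℝ → ℝ) (ρ : ℝ) (w : Fin p → ℝ) :
    Measure ((Fin n → Fin p → ℝ) × (Fin n → ℝ)) :=
  (Measure.pi fun _ : Fin n => stdGaussianPi (Fin p)).bind fun M =>
    (Measure.pi fun i : Fin n => signBer (f (ρ * ∑ j, w j * M i j))).map fun yv => (M, yv)

/-- Joint law of `(g, h, u, y)` in the auxiliary model: `g, h, u` independent standard
Gaussians and, conditionally on `u`, the labels are independent with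
`P(yᵢ = +1 | u) = f(ρ·uᵢ)`. -/
def mu1 (n p : ℕ) (f : ℝ → ℝ) (ρ : ℝ) :
    Measure ((Fin p → ℝ) × (Fin n → ℝ) × (Fin n → ℝ) × (Fin n → ℝ)) :=
  ((stdGaussianPi (Fin p)).prod
      ((stdGaussianPi (Fin n)).prod (stdGaussianPi (Fin n)))).bind fun ghu =>
    (Measure.pi fun i : Fin n => signBer (f (ρ * ghu.2.2 i))).map fun yv =>
      (ghu.1, ghu.2.1, ghu.2.2, yv)

/-- `ξ⁽²⁾(Θ)` evaluated at `g`: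
`min_{θ∈Θ} [ψ^{−1/2}·F_κ(⟨Λ^{1/2}w,θ⟩, ‖Π_{w⊥}Λ^{1/2}θ‖₂) + p^{−1/2}·gᵀΠ_{w⊥}Λ^{1/2}θ]`. -/
def xi2 (p : ℕ) (ψ κ : ℝ) (fρ : ℝ → ℝ) (Λ w : Fin p → ℝ) (Θ : Set (Fin p → ℝ))
    (g : Fin p → ℝ) : ℝ :=
  sInf ((fun θ =>
      (Real.sqrt ψ)⁻¹ * Fk fρ κ (∑ j, Real.sqrt (Λ j) * w j * θ j)
          (l2 (projv w fun j => Real.sqrt (Λ j) * θ j))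
        + (Real.sqrt (p : ℝ))⁻¹ *
            ∑ j, g j * projv w (fun j' => Real.sqrt (Λ j') * θ j') j) '' Θ)

/-
For fixed `θ` the maximum over `λ` in `ξ⁽¹⁾` is explicit: maximising over the direction of `λ` by
Cauchy–Schwarz on the cone `y ⊙ λ ≥ 0`, and then over its length in `[0, 1]`, gives
`p^{-1/2} (‖(y ⊙ a)₊‖₂ + gᵀΠ_{w⊥}Λ^{1/2}θ)₊` with `a = κ y - c₁ u - c₂ h`, up to an `O(p^{-1/2})`
error that arises only when `(y ⊙ a)₊ = 0`. Here `θ` enters `a` only through the pair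
`c = (⟨Λ^{1/2}w, θ⟩, ‖Π_{w⊥}Λ^{1/2}θ‖₂)`, which stays in a fixed compact set. Since
`‖(y ⊙ a)₊‖₂² / n` is the average of the squared hinge loss over i.i.d. samples `((uᵢ, hᵢ), yᵢ)`,
the law of large numbers gives `p^{-1/2} ‖(y ⊙ a)₊‖₂ → ψ^{-1/2} F_κ(c)` for every `c`, and a
Lipschitz constant in `c` that is bounded in probability makes the convergence uniform. Finally,
`t ↦ t₊` commutes with the infimum over `θ`.
-/

section HighProbability

variable {ι : Type*} {Ω Ω' : ι → Type*} [∀ i, MeasurableSpace (Ω i)] [∀ i, MeasurableSpace (Ω' i)]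

/-- The filter on `Σ i, Ω i` of events whose probability under `μ i` tends to one along `l`.
Convergence in probability of `X : (Σ i, Ω i) → ℝ` to `a` is `Tendsto X (highProb l μ) (𝓝 a)`, so
that the continuous mapping theorem is the continuity calculus of `Tendsto`. -/
def highProb (l : Filter ι) (μ : ∀ i, Measure (Ω i)) : Filter (Σ i, Ω i) where
  sets := {S | Tendsto (fun i => μ i {ω | ⟨i, ω⟩ ∉ S}) l (𝓝 0)}
  univ_sets := by simpa using tendsto_const_nhds
  sets_of_superset hS hST :=
    tendsto_of_tendsto_of_tendsto_of_le_of_le tendsto_const_nhds hS (fun _ => bot_le)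
      fun i => measure_mono fun _ hω h => hω (hST h)
  inter_sets {S T} hS hT := by
    refine tendsto_of_tendsto_of_tendsto_of_le_of_le tendsto_const_nhds
      (by simpa using hS.add hT) (fun _ => bot_le) fun i => ?_
    refine (measure_mono fun ω hω => ?_).trans (measure_union_le _ _)
    exact not_and_or.1 hω

variable {l : Filter ι} {μ : ∀ i, Measure (Ω i)}

lemma eventually_highProb {P : (Σ i, Ω i) → Prop} :
    (∀ᶠ q in highProb l μ, P q) ↔ Tendsto (fun i => μ i {ω | ¬ P ⟨i, ω⟩}) l (𝓝 0) := Iff.rfl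

lemma tendsto_fst_highProb : Tendsto Sigma.fst (highProb l μ) l := fun _ hS =>
  tendsto_const_nhds.congr' <| by
    filter_upwards [hS] with i hi
    simp [hi]

lemma eventually_highProb_of_ae {P : (Σ i, Ω i) → Prop} (h : ∀ i, ∀ᵐ ω ∂μ i, P ⟨i, ω⟩) :
    ∀ᶠ q in highProb l μ, P q :=
  eventually_highProb.2 <| tendsto_const_nhds.congr fun i => (ae_iff.1 (h i)).symm

lemma tendsto_highProb_map {T : ∀ i, Ω i → Ω' i} (hT : ∀ i, AEMeasurable (T i) (μ i)) :
    Tendsto (Sigma.map id T) (highProb l μ) (highProb l fun i => (μ i).map (T i)) := fun _ hS =>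
  tendsto_of_tendsto_of_tendsto_of_le_of_le tendsto_const_nhds (show Tendsto _ _ _ from hS)
    (fun _ => bot_le) fun i => Measure.le_map_apply (hT i) _

end HighProbability

section UniformConvergence

lemma tendstoUniformlyOn_of_eventually_lipschitzOnWith {γ α β : Type*} [PseudoMetricSpace α]
    [PseudoMetricSpace β] {l : Filter γ} {X : γ → α → β} {F : α → β} {K : Set α} {A : NNReal}
    (hK : IsCompact K) (hX : ∀ a ∈ K, Tendsto (fun z => X z a) l (𝓝 (F a)))
    (hLip : ∀ᶠ z in l, LipschitzOnWith A (X z) K) : TendstoUniformlyOn X F l K := by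
  set S : Set γ := {z | LipschitzOnWith A (X z) K}
  have hS : map ((↑) : S → γ) (comap (↑) l) = l := by
    rw [Filter.map_comap, Subtype.range_coe, inf_eq_left.2 (le_principal_iff.2 hLip)]
  have hequi : EquicontinuousOn (fun z : S => X z) K :=
    (LipschitzOnWith.uniformEquicontinuousOn _ A fun z => z.2).equicontinuousOn
  have hunif := (EquicontinuousOn.tendsto_uniformOnFun_iff_pi' (𝔖 := {K})
    (by simpa using hK) (by simpa using hequi) (comap ((↑) : S → γ) l) F).2 <|
      tendsto_pi_nhds.2 fun a => (hX a (by simpa using a.2)).comp tendsto_comap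
  rw [← hS]
  exact UniformOnFun.tendsto_iff_tendstoUniformlyOn.1 hunif K rfl

end UniformConvergence

section LawOfLargeNumbers

variable {X : Type*} [MeasurableSpace X]

lemma integral_sum_pi {ν : Measure X} [IsProbabilityMeasure ν] {φ : X → ℝ} (hφ : Integrable φ ν)
    (n : ℕ) : ∫ x, ∑ i, φ (x i) ∂Measure.pi (fun _ : Fin n => ν) = n * ∫ z, φ z ∂ν := by
  rw [integral_finsetSum _ fun _ _ => integrable_comp_eval hφ]
  simp [integral_comp_eval (μ := fun _ : Fin n => ν) hφ.aestronglyMeasurable]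

lemma measure_pi_abs_average_sub_ge_le {ν : Measure X} [IsProbabilityMeasure ν] {φ : X → ℝ}
    (hφ : MemLp φ 2 ν) {n : ℕ} (hn : 0 < n) {δ : ℝ} (hδ : 0 < δ) :
    Measure.pi (fun _ : Fin n => ν) {x | δ ≤ |(∑ i, φ (x i)) / n - ∫ z, φ z ∂ν|}
      ≤ ENNReal.ofReal ((∫ z, φ z ^ 2 ∂ν) / (n * δ ^ 2)) := by
  have hn' : (0 : ℝ) < n := Nat.cast_pos.2 hn
  have hsum : MemLp (∑ i, fun x : Fin n → X => φ (x i)) 2 (Measure.pi fun _ => ν) :=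
    memLp_finsetSum' _ fun i _ => hφ.comp_measurePreserving (measurePreserving_eval _ i)
  have hmean := integral_sum_pi (hφ.integrable one_le_two) n
  have hvar := variance_sum_pi (μ := fun _ : Fin n => ν) (X := fun _ => φ) fun _ => hφ
  have cheb := meas_ge_le_variance_div_sq hsum (mul_pos hn' hδ)
  simp only [Finset.sum_apply, hmean, hvar, Finset.sum_const, Finset.card_univ, Fintype.card_fin,
    nsmul_eq_mul] at cheb
  refine (measure_mono fun x hx => ?_).trans (cheb.trans (ENNReal.ofReal_le_ofReal ?_))
  · calc n * δ ≤ n * |(∑ i, φ (x i)) / n - ∫ z, φ z ∂ν| := by gcongr; exact hx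
      _ = |∑ i, φ (x i) - n * ∫ z, φ z ∂ν| := by
        rw [← abs_of_pos hn', ← abs_mul, abs_of_pos hn']
        congr 1
        field_simp
  · calc n * Var[φ; ν] / (n * δ) ^ 2 = Var[φ; ν] / (n * δ ^ 2) := by field_simp
      _ ≤ (∫ z, φ z ^ 2 ∂ν) / (n * δ ^ 2) := by
        gcongr
        exact variance_le_expectation_sq hφ.1

theorem tendsto_average_sub_integral_highProb {ν : ℕ → Measure X}
    [∀ n, IsProbabilityMeasure (ν n)] {φ : X → ℝ} {B : ℝ} (hφ : ∀ n, MemLp φ 2 (ν n))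
    (hB : ∀ n, ∫ z, φ z ^ 2 ∂ν n ≤ B) :
    Tendsto (fun q : Σ n, Fin n → X => (∑ i, φ (q.2 i)) / q.1 - ∫ z, φ z ∂ν q.1)
      (highProb atTop fun n => Measure.pi fun _ => ν n) (𝓝 0) := by
  refine Metric.tendsto_nhds.2 fun δ hδ => eventually_highProb.2 ?_
  have hbound : Tendsto (fun n : ℕ => ENNReal.ofReal (B / (n * δ ^ 2))) atTop (𝓝 0) := by
    simpa using ENNReal.tendsto_ofReal (tendsto_const_nhds.div_atTop
      (tendsto_natCast_atTop_atTop.atTop_mul_const (sq_pos_of_pos hδ)))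
  refine tendsto_of_tendsto_of_tendsto_of_le_of_le' tendsto_const_nhds hbound
    (Eventually.of_forall fun _ => bot_le) ?_
  filter_upwards [eventually_gt_atTop 0] with n hn
  simp only [Real.dist_eq, sub_zero, not_lt]
  refine (measure_pi_abs_average_sub_ge_le (hφ n) hn hδ).trans (ENNReal.ofReal_le_ofReal ?_)
  gcongr
  exact hB n

end LawOfLargeNumbers

section PiKernel

variable {ι α : Type*} [Fintype ι] {X : ι → Type*} [MeasurableSpace α]
  [∀ i, MeasurableSpace (X i)]

/-- The product of finitely many Markov kernels: conditionally on `a`, the coordinates are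
independent with laws `κ i a`. -/
def piKernel (κ : ∀ i, Kernel α (X i)) [∀ i, IsMarkovKernel (κ i)] : Kernel α (∀ i, X i) where
  toFun a := Measure.pi fun i => κ i a
  measurable' := by
    refine .measure_of_isPiSystem_of_isProbabilityMeasure generateFrom_pi.symm isPiSystem_pi ?_
    rintro _ ⟨s, hs, rfl⟩
    simp only [Measure.pi_pi]
    exact Finset.measurable_fun_prod _ fun i _ => (κ i).measurable_coe (hs i (mem_univ i))

lemma piKernel_apply (κ : ∀ i, Kernel α (X i)) [∀ i, IsMarkovKernel (κ i)] (a : α) :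
    piKernel κ a = Measure.pi fun i => κ i a := rfl

instance (κ : ∀ i, Kernel α (X i)) [∀ i, IsMarkovKernel (κ i)] : IsMarkovKernel (piKernel κ) :=
  ⟨fun a => by rw [piKernel_apply]; infer_instance⟩

lemma lintegral_prod_pi (μ : ∀ i, Measure (X i)) [∀ i, IsProbabilityMeasure (μ i)]
    {k : ∀ i, X i → ENNReal} (hk : ∀ i, Measurable (k i)) :
    ∫⁻ x, ∏ i, k i (x i) ∂Measure.pi μ = ∏ i, ∫⁻ x, k i x ∂μ i := by
  rw [lintegral_prod_eq_prod_lintegral_of_indepFun Finset.univ (fun i (x : ∀ i, X i) => k i (x i))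
    (iIndepFun_pi fun i => (hk i).aemeasurable) fun i => (hk i).comp (measurable_pi_apply i)]
  exact Finset.prod_congr rfl fun i _ => (measurePreserving_eval μ i).lintegral_comp (hk i)

lemma map_zip_compProd_piKernel {Y : ι → Type*} [∀ i, MeasurableSpace (Y i)]
    (μ : ∀ i, Measure (X i)) [∀ i, IsProbabilityMeasure (μ i)]
    (κ : ∀ i, Kernel (X i) (Y i)) [∀ i, IsMarkovKernel (κ i)] :
    (Measure.pi μ ⊗ₘ piKernel fun i => (κ i).comap (fun x => x i) (measurable_pi_apply i)).map
      (fun q i => (q.1 i, q.2 i)) = Measure.pi fun i => μ i ⊗ₘ κ i := by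
  refine (Measure.pi_eq fun s hs => ?_).symm
  rw [Measure.map_apply (by fun_prop) (.univ_pi hs),
    Measure.compProd_apply (MeasurableSet.univ_pi hs |>.preimage (by fun_prop))]
  calc ∫⁻ x, _ ∂Measure.pi μ = ∫⁻ x, ∏ i, κ i (x i) (Prod.mk (x i) ⁻¹' s i) ∂Measure.pi μ :=
        lintegral_congr fun x => by
          rw [piKernel_apply, ← Measure.pi_pi]
          congr 1
    _ = ∏ i, ∫⁻ x, κ i x (Prod.mk x ⁻¹' s i) ∂μ i :=
        lintegral_prod_pi μ fun i => Kernel.measurable_kernel_prodMk_left (hs i)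
    _ = ∏ i, (μ i ⊗ₘ κ i) (s i) := by simp only [Measure.compProd_apply (hs _)]

lemma map_compProd_comap {β γ : Type*} [MeasurableSpace β] [MeasurableSpace γ] {μ : Measure α}
    {ν : Measure β} [SFinite μ] [SFinite ν] {T : α → β} (hT : MeasurePreserving T μ ν)
    (κ : Kernel β γ) [IsMarkovKernel κ] :
    (μ ⊗ₘ κ.comap T hT.measurable).map (Prod.map T id) = ν ⊗ₘ κ := by
  have hTid : Measurable (Prod.map T (id : γ → γ)) := hT.measurable.prodMap measurable_id
  ext s hs
  rw [Measure.map_apply hTid hs, Measure.compProd_apply (hs.preimage hTid),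
    Measure.compProd_apply hs, ← hT.lintegral_comp (Kernel.measurable_kernel_prodMk_left hs)]
  rfl

end PiKernel

section Model

instance : IsProbabilityMeasure stdG := by unfold stdG; infer_instance

instance (ι : Type*) [Fintype ι] : IsProbabilityMeasure (stdGaussianPi ι) := by
  unfold stdGaussianPi; infer_instance

instance (q : unitInterval) : IsProbabilityMeasure (signBer q) := by
  refine ⟨?_⟩
  simp [signBer, ← ENNReal.ofReal_add q.2.1 (sub_nonneg.2 q.2.2)]

/-- The law of a random sign as a Markov kernel in the probability of `+1`. -/
def signKernel : Kernel unitInterval ℝ where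
  toFun q := signBer q
  measurable' := by
    refine Measure.measurable_of_measurable_coe _ fun s _ => ?_
    simp only [signBer, Measure.add_apply, Measure.smul_apply]
    fun_prop

variable (f : C(ℝ, unitInterval)) (ρ : ℝ)

/-- The conditional law of a label given the pair `x = (uᵢ, hᵢ)`. -/
def labelKernel : Kernel (ℝ × ℝ) ℝ :=
  signKernel.comap (fun x => f (ρ * x.1)) (by fun_prop)

/-- The law of one sample `((uᵢ, hᵢ), yᵢ)` of the auxiliary model. -/
def sampleLaw : Measure ((ℝ × ℝ) × ℝ) := (stdG.prod stdG) ⊗ₘ labelKernel f ρ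

/-- The samples `((uᵢ, hᵢ), yᵢ)` extracted from the data `(g, h, u, y)` of the auxiliary model. -/
def samples {n p : ℕ} (q : (Fin p → ℝ) × (Fin n → ℝ) × (Fin n → ℝ) × (Fin n → ℝ)) :
    Fin n → (ℝ × ℝ) × ℝ := fun i => ((q.2.2.1 i, q.2.1 i), q.2.2.2 i)

instance : IsMarkovKernel signKernel :=
  ⟨fun q => inferInstanceAs (IsProbabilityMeasure (signBer q))⟩

instance : IsMarkovKernel (labelKernel f ρ) := by unfold labelKernel; infer_instance

instance : IsProbabilityMeasure (sampleLaw f ρ) := by unfold sampleLaw; infer_instance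

lemma labelKernel_apply (x : ℝ × ℝ) : labelKernel f ρ x = signBer (f (ρ * x.1)) := rfl

lemma measurePreserving_noise (n p : ℕ) :
    MeasurePreserving (fun (q : (Fin p → ℝ) × (Fin n → ℝ) × (Fin n → ℝ)) i => (q.2.2 i, q.2.1 i))
      ((stdGaussianPi (Fin p)).prod ((stdGaussianPi (Fin n)).prod (stdGaussianPi (Fin n))))
      (Measure.pi fun _ => stdG.prod stdG) :=
  ((measurePreserving_arrowProdEquivProdArrow ℝ ℝ (Fin n) (fun _ => stdG)
    fun _ => stdG).symm _).comp (Measure.measurePreserving_swap.comp measurePreserving_snd)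

lemma measurable_samples (n p : ℕ) : Measurable (samples (n := n) (p := p)) := by
  unfold samples
  fun_prop

lemma mu1_eq_map_compProd (n p : ℕ) :
    mu1 n p (fun x => f x) ρ =
      (((stdGaussianPi (Fin p)).prod ((stdGaussianPi (Fin n)).prod (stdGaussianPi (Fin n)))) ⊗ₘ
        (piKernel fun i => (labelKernel f ρ).comap (fun x : Fin n → ℝ × ℝ => x i)
          (measurable_pi_apply i)).comap _ (measurePreserving_noise n p).measurable).map
      fun q => (q.1.1, q.1.2.1, q.1.2.2, q.2) := by
  rw [Measure.compProd_eq_comp_prod, Measure.map_comp _ _ (by fun_prop)]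
  refine congrArg (Measure.bind _) (funext fun q => ?_)
  rw [Kernel.map_apply _ (by fun_prop), Kernel.prod_apply, Kernel.id_apply, Measure.dirac_prod,
    Measure.map_map (by fun_prop) (by fun_prop)]
  rfl

lemma map_samples_mu1 (n p : ℕ) :
    (mu1 n p (fun x => f x) ρ).map samples = Measure.pi fun _ : Fin n => sampleLaw f ρ := by
  have hN := measurePreserving_noise n p
  have hzip : Measurable fun (q : (Fin n → ℝ × ℝ) × (Fin n → ℝ)) i => (q.1 i, q.2 i) := by
    fun_prop
  rw [mu1_eq_map_compProd, Measure.map_map (measurable_samples n p) (by fun_prop)]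
  refine (Measure.map_map hzip (hN.measurable.prodMap measurable_id)).symm.trans ?_
  rw [map_compProd_comap hN]
  exact map_zip_compProd_piKernel _ _

lemma sampleLaw_label : ∀ᵐ z ∂sampleLaw f ρ, z.2 = 1 ∨ z.2 = -1 := by
  refine Measure.ae_compProd_of_ae_ae (by measurability) (ae_of_all _ fun x => ?_)
  rw [labelKernel_apply, signBer, ae_add_measure_iff]
  exact ⟨Measure.ae_smul_measure (by simp [ae_dirac_eq]) _,
    Measure.ae_smul_measure (by simp [ae_dirac_eq]) _⟩

lemma integral_signBer (q : unitInterval) (φ : ℝ → ℝ) :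
    ∫ y, φ y ∂signBer q = q * φ 1 + (1 - q) * φ (-1) := by
  have hq : 0 ≤ 1 - (q : ℝ) := sub_nonneg.2 q.2.2
  rw [signBer, integral_add_measure ((integrable_dirac (by simp)).smul_measure (by simp))
    ((integrable_dirac (by simp)).smul_measure (by simp))]
  simp [ENNReal.toReal_ofReal q.2.1, ENNReal.toReal_ofReal hq]

lemma integral_sampleLaw {φ : (ℝ × ℝ) × ℝ → ℝ} (hφ : Integrable φ (sampleLaw f ρ)) :
    ∫ z, φ z ∂sampleLaw f ρ =
      ∫ x, (f (ρ * x.1) * φ (x, 1) + (1 - f (ρ * x.1)) * φ (x, -1)) ∂stdG.prod stdG := by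
  rw [sampleLaw, Measure.integral_compProd hφ]
  simp only [labelKernel_apply, integral_signBer]

lemma measurePreserving_fst_sampleLaw :
    MeasurePreserving Prod.fst (sampleLaw f ρ) (stdG.prod stdG) :=
  ⟨measurable_fst, Measure.fst_compProd _ _⟩

end Model

section Moments

variable {f : C(ℝ, unitInterval)} {φ : (ℝ × ℝ) × ℝ → ℝ} {W : ℝ × ℝ → ℝ}

lemma memLp_sampleLaw {r : ENNReal} (hφ : Measurable φ)
    (hφW : ∀ x y, y = 1 ∨ y = -1 → |φ (x, y)| ≤ W x) (hW : MemLp W r (stdG.prod stdG)) (ρ : ℝ) :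
    MemLp φ r (sampleLaw f ρ) := by
  refine (hW.comp_measurePreserving (measurePreserving_fst_sampleLaw f ρ)).mono'
    hφ.aestronglyMeasurable ?_
  filter_upwards [sampleLaw_label f ρ] with z hz using hφW z.1 z.2 hz

lemma integrable_sampleLaw (hφ : Measurable φ)
    (hφW : ∀ x y, y = 1 ∨ y = -1 → |φ (x, y)| ≤ W x) (hW : Integrable W (stdG.prod stdG))
    (ρ : ℝ) : Integrable φ (sampleLaw f ρ) :=
  memLp_one_iff_integrable.1 (memLp_sampleLaw hφ hφW (memLp_one_iff_integrable.2 hW) ρ)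

lemma integral_sampleLaw_le (hφ : Measurable φ)
    (hφW : ∀ x y, y = 1 ∨ y = -1 → |φ (x, y)| ≤ W x) (hW : Integrable W (stdG.prod stdG))
    (ρ : ℝ) : ∫ z, φ z ∂sampleLaw f ρ ≤ ∫ x, W x ∂stdG.prod stdG := by
  have hint := integrable_sampleLaw (f := f) hφ hφW hW ρ
  have hfst := measurePreserving_fst_sampleLaw f ρ
  rw [← hfst.map_eq, integral_map hfst.measurable.aemeasurable
    (hfst.map_eq ▸ hW.aestronglyMeasurable)]
  refine integral_mono_ae hint (hfst.integrable_comp_of_integrable hW) ?_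
  filter_upwards [sampleLaw_label f ρ] with z hz using (le_abs_self _).trans (hφW z.1 z.2 hz)

lemma continuous_integral_sampleLaw (hφ : Measurable φ)
    (hφW : ∀ x y, y = 1 ∨ y = -1 → |φ (x, y)| ≤ W x) (hW : Integrable W (stdG.prod stdG)) :
    Continuous fun ρ => ∫ z, φ z ∂sampleLaw f ρ := by
  simp only [fun ρ => integral_sampleLaw f ρ (integrable_sampleLaw hφ hφW hW ρ)]
  refine continuous_of_dominated (bound := W) (fun ρ => ?_) (fun ρ => ae_of_all _ fun x => ?_) hW
    (ae_of_all _ fun x => by fun_prop)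
  · have : Measurable fun x => φ (x, 1) := hφ.comp (by fun_prop)
    have : Measurable fun x => φ (x, -1) := hφ.comp (by fun_prop)
    fun_prop
  · have hq := (f (ρ * x.1)).2
    exact abs_le.2 <| convex_Icc (-W x) (W x) (abs_le.1 (hφW x 1 (.inl rfl)))
      (abs_le.1 (hφW x (-1) (.inr rfl))) hq.1 (sub_nonneg.2 hq.2) (add_sub_cancel _ _)

lemma integrable_weight_mul (hφ : Measurable φ)
    (hφW : ∀ x y, y = 1 ∨ y = -1 → |φ (x, y)| ≤ W x) (hW : Integrable W (stdG.prod stdG))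
    {a : ℝ → unitInterval} (ha : Measurable a) {y : ℝ} (hy : y = 1 ∨ y = -1) :
    Integrable (fun x : ℝ × ℝ => a x.1 * φ (x, y)) (stdG.prod stdG) := by
  have : Measurable fun x => φ (x, y) := hφ.comp (by fun_prop)
  refine hW.mono' (by fun_prop) (ae_of_all _ fun x => ?_)
  rw [norm_mul, Real.norm_of_nonneg (a x.1).2.1]
  exact (mul_le_of_le_one_left (norm_nonneg _) (a x.1).2.2).trans (hφW x y hy)

lemma measurePreserving_prodMap_neg :
    MeasurePreserving (Prod.map id Neg.neg) (stdG.prod stdG) (stdG.prod stdG) :=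
  (MeasurePreserving.id stdG).prod ⟨measurable_neg, by
    simpa [stdG] using gaussianReal_map_neg (μ := 0) (v := 1)⟩

/- In `Fk` the noise `Z` is not multiplied by the label; reflecting `h` where `y = -1` turns
`y h` into `h`. -/
lemma integral_sampleLaw_eq_integral_neg (hφ : Measurable φ)
    (hφW : ∀ x y, y = 1 ∨ y = -1 → |φ (x, y)| ≤ W x) (hW : Integrable W (stdG.prod stdG))
    (ρ : ℝ) : ∫ z, φ z ∂sampleLaw f ρ = ∫ u, ∫ h,
      (f (ρ * u) * φ ((u, h), 1) + (1 - f (ρ * u)) * φ ((u, -h), -1)) ∂stdG ∂stdG := by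
  have hf : Measurable fun u => f (ρ * u) := by fun_prop
  have hpos := integrable_weight_mul hφ hφW hW hf (.inl rfl)
  have hneg := integrable_weight_mul hφ hφW hW (unitInterval.measurable_symm.comp hf) (.inr rfl)
  have hrefl := measurePreserving_prodMap_neg
  have hnegemb : MeasurableEmbedding (Prod.map id Neg.neg : ℝ × ℝ → ℝ × ℝ) :=
    MeasurableEmbedding.id.prodMap (MeasurableEquiv.neg ℝ).measurableEmbedding
  simp only [Function.comp_apply, unitInterval.coe_symm_eq] at hneg
  have hneg' : Integrable (fun x : ℝ × ℝ => (1 - (f (ρ * x.1) : ℝ)) * φ ((x.1, -x.2), -1))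
      (stdG.prod stdG) := hrefl.integrable_comp_of_integrable hneg
  calc ∫ z, φ z ∂sampleLaw f ρ
      = ∫ x, (f (ρ * x.1) : ℝ) * φ (x, 1) ∂stdG.prod stdG
          + ∫ x, (1 - (f (ρ * x.1) : ℝ)) * φ (x, -1) ∂stdG.prod stdG := by
        rw [integral_sampleLaw f ρ (integrable_sampleLaw hφ hφW hW ρ), integral_add hpos hneg]
    _ = ∫ x, (f (ρ * x.1) : ℝ) * φ (x, 1) ∂stdG.prod stdG
          + ∫ x : ℝ × ℝ, (1 - (f (ρ * x.1) : ℝ)) * φ ((x.1, -x.2), -1) ∂stdG.prod stdG := by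
        rw [← hrefl.integral_comp hnegemb fun x => (1 - (f (ρ * x.1) : ℝ)) * φ (x, -1)]
        rfl
    _ = _ := by
        rw [← integral_add hpos hneg']
        exact integral_prod _ (hpos.add hneg')

theorem tendsto_average_samples (hφ : Measurable φ)
    (hφW : ∀ x y, y = 1 ∨ y = -1 → |φ (x, y)| ≤ W x) (hW : MemLp W 2 (stdG.prod stdG))
    {ρn : ℕ → ℝ} {ρ : ℝ} (hρ : Tendsto ρn atTop (𝓝 ρ)) :
    Tendsto (fun q : Σ n, Fin n → (ℝ × ℝ) × ℝ => (∑ i, φ (q.2 i)) / q.1)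
      (highProb atTop fun n => Measure.pi fun _ => sampleLaw f (ρn n))
      (𝓝 (∫ z, φ z ∂sampleLaw f ρ)) := by
  have hsq : ∀ x y, y = 1 ∨ y = -1 → |φ (x, y) ^ 2| ≤ W x ^ 2 := fun x y hy => by
    rw [abs_pow]
    exact pow_le_pow_left₀ (abs_nonneg _) (hφW x y hy) 2
  have hdev := tendsto_average_sub_integral_highProb
    (fun n => memLp_sampleLaw (f := f) hφ hφW hW (ρn n))
    fun n => integral_sampleLaw_le (hφ.pow_const 2) hsq hW.integrable_sq (ρn n)
  have hmean : Tendsto (fun q : Σ n, Fin n → (ℝ × ℝ) × ℝ => ∫ z, φ z ∂sampleLaw f (ρn q.1))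
      (highProb atTop fun n => Measure.pi fun _ => sampleLaw f (ρn n)) _ :=
    ((continuous_integral_sampleLaw hφ hφW (hW.integrable one_le_two)).tendsto ρ).comp
      (hρ.comp tendsto_fst_highProb)
  simpa using hdev.add hmean

end Moments

section EuclideanNorm

variable {ι : Type*} [Fintype ι]

lemma l2_eq_norm (v : ι → ℝ) : l2 v = ‖WithLp.toLp 2 v‖ := by
  simp [EuclideanSpace.norm_eq, l2]

lemma l2_nonneg (v : ι → ℝ) : 0 ≤ l2 v := Real.sqrt_nonneg _

lemma l2_sq (v : ι → ℝ) : l2 v ^ 2 = ∑ i, v i ^ 2 :=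
  Real.sq_sqrt (Finset.sum_nonneg fun _ _ => sq_nonneg _)

lemma abs_sum_mul_le_l2_mul_l2 (v w : ι → ℝ) : |∑ i, v i * w i| ≤ l2 v * l2 w := by
  simpa [l2_eq_norm, PiLp.inner_apply, mul_comm] using
    abs_real_inner_le_norm (WithLp.toLp 2 v) (WithLp.toLp 2 w)

lemma abs_l2_sub_l2_le (v w : ι → ℝ) : |l2 v - l2 w| ≤ l2 fun i => v i - w i := by
  simp only [l2_eq_norm]
  exact abs_norm_sub_norm_le (WithLp.toLp 2 v) (WithLp.toLp 2 w)

lemma l2_div_eq_one {v : ι → ℝ} {r : ℝ} (hr : r = l2 v) (hpos : 0 < r) :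
    l2 (fun i => v i / r) = 1 := by
  subst hr
  rw [l2]
  simp_rw [div_pow, ← Finset.sum_div, ← l2_sq, div_self (pow_pos hpos 2).ne', Real.sqrt_one]

lemma l2_projv_le {w : ι → ℝ} (hw : l2 w = 1) (v : ι → ℝ) : l2 (projv w v) ≤ l2 v := by
  have hw2 : ∑ i, w i ^ 2 = 1 := by rw [← l2_sq, hw, one_pow]
  refine Real.sqrt_le_sqrt ?_
  calc ∑ i, projv w v i ^ 2
      = ∑ i, (v i ^ 2 - 2 * (∑ k, w k * v k) * (w i * v i) + (∑ k, w k * v k) ^ 2 * w i ^ 2) :=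
        Finset.sum_congr rfl fun i _ => by rw [projv]; ring
    _ = ∑ i, v i ^ 2 - (∑ k, w k * v k) ^ 2 := by
        rw [Finset.sum_add_distrib, Finset.sum_sub_distrib, ← Finset.mul_sum, ← Finset.mul_sum, hw2]
        ring
    _ ≤ ∑ i, v i ^ 2 := sub_le_self _ (sq_nonneg _)

lemma l2_sqrt_mul_le {Λ : ι → ℝ} {C : ℝ} (hΛ : ∀ j, Λ j ≤ C) (θ : ι → ℝ) :
    l2 (fun j => √(Λ j) * θ j) ≤ √C * l2 θ := by
  rw [← Real.sqrt_sq (mul_nonneg (Real.sqrt_nonneg C) (l2_nonneg θ)), mul_pow, l2_sq,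
    Finset.mul_sum]
  refine Real.sqrt_le_sqrt (Finset.sum_le_sum fun j _ => ?_)
  rw [mul_pow]
  gcongr
  exact hΛ j

end EuclideanNorm

section InnerMaximum

variable {n : ℕ} {y a : Fin n → ℝ} {b D s : ℝ}

lemma sum_mul_le_of_mem_lamSet (hy : ∀ i, y i = 1 ∨ y i = -1) {lam : Fin n → ℝ}
    (hlam : lam ∈ lamSet n y) :
    ∑ i, lam i * a i ≤ l2 lam * l2 (fun i => max (y i * a i) 0) := by
  have hyy : ∀ i, y i * y i = 1 := fun i => mul_self_eq_one_iff.2 (hy i)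
  have hnorm : l2 (fun i => y i * lam i) = l2 lam := by
    simp only [l2, mul_pow, sq (y _), hyy, one_mul]
  calc ∑ i, lam i * a i = ∑ i, (y i * lam i) * (y i * a i) :=
        Finset.sum_congr rfl fun i _ => by linear_combination -(lam i * a i) * hyy i
    _ ≤ ∑ i, (y i * lam i) * max (y i * a i) 0 := Finset.sum_le_sum fun i _ =>
        mul_le_mul_of_nonneg_left (le_max_left _ _) (hlam.2 i)
    _ ≤ l2 lam * l2 (fun i => max (y i * a i) 0) := by
        rw [← hnorm]
        exact (le_abs_self _).trans (abs_sum_mul_le_l2_mul_l2 _ _)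

/- If the positive part of `y a` vanishes it cannot be normalised; a coordinate vector is then
feasible of norm one, at the cost of the error `D`. -/
lemma exists_mem_lamSet_le_sum_mul (hy : ∀ i, y i = 1 ∨ y i = -1) (hD : 0 ≤ D)
    {i₀ : Fin n} (hi₀ : -D ≤ y i₀ * a i₀) :
    ∃ lam ∈ lamSet n y, l2 lam = 1 ∧
      l2 (fun i => max (y i * a i) 0) - D ≤ ∑ i, lam i * a i := by
  have hyy : ∀ i, y i * y i = 1 := fun i => mul_self_eq_one_iff.2 (hy i)
  set N := l2 fun i => max (y i * a i) 0 with hN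
  obtain hpos | hzero := (l2_nonneg fun i => max (y i * a i) 0).lt_or_eq
  · have hnorm : l2 (fun i => y i * max (y i * a i) 0 / N) = 1 := by
      refine l2_div_eq_one ?_ hpos
      simp only [hN, l2, mul_pow, sq (y _), hyy, one_mul]
    have hsum : ∑ i, y i * max (y i * a i) 0 / N * a i = N := by
      calc ∑ i, y i * max (y i * a i) 0 / N * a i = (∑ i, max (y i * a i) 0 ^ 2) / N := by
            rw [Finset.sum_div]
            refine Finset.sum_congr rfl fun i _ => ?_
            rcases le_total (y i * a i) 0 with h | h
            · simp [max_eq_right h]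
            · rw [max_eq_left h]; ring
        _ = N := by rw [← l2_sq, ← hN, sq, mul_div_cancel_right₀ _ hpos.ne']
    refine ⟨_, ⟨hnorm.le, fun i => ?_⟩, hnorm, (sub_le_self N hD).trans_eq hsum.symm⟩
    rw [← mul_div_assoc, ← mul_assoc, hyy, one_mul]
    positivity
  · have hnorm : l2 (Pi.single i₀ (y i₀)) = 1 := by
      simp [l2, Pi.single_apply, ite_pow, sq, hyy]
    refine ⟨Pi.single i₀ (y i₀), ⟨hnorm.le, fun i => ?_⟩, hnorm, ?_⟩
    · obtain rfl | hi := eq_or_ne i i₀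
      · simp [hyy]
      · simp [hi]
    · simpa [hN, ← hzero, Pi.single_apply] using hi₀

theorem abs_sSup_lamSet_sub_le (hy : ∀ i, y i = 1 ∨ y i = -1) (hs : 0 ≤ s) (hD : 0 ≤ D)
    {i₀ : Fin n} (hi₀ : -D ≤ y i₀ * a i₀) :
    |sSup ((fun lam => s * ((∑ i, lam i * a i) + l2 lam * b)) '' lamSet n y)
        - s * max (l2 (fun i => max (y i * a i) 0) + b) 0| ≤ s * D := by
  set N := l2 fun i => max (y i * a i) 0
  have hub : ∀ x ∈ (fun lam => s * ((∑ i, lam i * a i) + l2 lam * b)) '' lamSet n y,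
      x ≤ s * max (N + b) 0 := by
    rintro _ ⟨lam, hlam, rfl⟩
    refine mul_le_mul_of_nonneg_left ?_ hs
    calc (∑ i, lam i * a i) + l2 lam * b ≤ l2 lam * (N + b) := by
          rw [mul_add]
          gcongr
          exact sum_mul_le_of_mem_lamSet hy hlam
      _ ≤ l2 lam * max (N + b) 0 := by gcongr; exacts [l2_nonneg lam, le_max_left _ _]
      _ ≤ max (N + b) 0 := mul_le_of_le_one_left (le_max_right _ _) hlam.1
  have hzero : (0 : Fin n → ℝ) ∈ lamSet n y := ⟨by simp [l2], by simp⟩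
  have hle := csSup_le (Set.Nonempty.image _ ⟨0, hzero⟩) hub
  refine abs_sub_le_iff.2 ⟨by linarith [mul_nonneg hs hD], ?_⟩
  rw [sub_le_iff_le_add', ← sub_le_iff_le_add, ← mul_sub]
  obtain hneg | hpos := le_total (N + b) 0
  · refine (mul_nonpos_of_nonneg_of_nonpos hs (by simpa [max_eq_right hneg])).trans ?_
    exact le_csSup ⟨_, hub⟩ ⟨0, hzero, by simp [l2]⟩
  · obtain ⟨lam, hlam, hnorm, hsum⟩ := exists_mem_lamSet_le_sum_mul hy hD hi₀
    refine le_trans ?_ (le_csSup ⟨_, hub⟩ ⟨lam, hlam, rfl⟩)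
    rw [max_eq_left hpos]
    simp only [hnorm, one_mul]
    gcongr
    linarith

end InnerMaximum

section Infimum

variable {α : Type*} {S : Set α} {A B : α → ℝ} {ε : ℝ}

lemma abs_sInf_image_sub_le (hS : S.Nonempty) (hB : BddBelow (B '' S))
    (h : ∀ x ∈ S, |A x - B x| ≤ ε) : |sInf (A '' S) - sInf (B '' S)| ≤ ε := by
  obtain ⟨m, hm⟩ := hB
  have hB' : ∀ x ∈ S, sInf (B '' S) ≤ B x := fun x hx => csInf_le ⟨m, hm⟩ ⟨x, hx, rfl⟩
  have hA : ∀ x ∈ S, sInf (A '' S) ≤ A x := fun x hx => by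
    refine csInf_le ⟨m - ε, ?_⟩ ⟨x, hx, rfl⟩
    rintro _ ⟨z, hz, rfl⟩
    linarith [hm ⟨z, hz, rfl⟩, (abs_le.1 (h z hz)).1]
  refine abs_sub_le_iff.2 ⟨?_, ?_⟩ <;> rw [sub_le_comm] <;> refine le_csInf (hS.image _) ?_ <;>
    rintro _ ⟨x, hx, rfl⟩
  · linarith [hA x hx, (abs_le.1 (h x hx)).2]
  · linarith [hB' x hx, (abs_le.1 (h x hx)).1]

lemma max_sInf_image (hS : S.Nonempty) (hB : BddBelow (B '' S)) (b : ℝ) :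
    max (sInf (B '' S)) b = sInf ((fun x => max (B x) b) '' S) := by
  have hmono : Monotone fun t : ℝ => max t b := fun _ _ h => max_le_max_right b h
  rw [hmono.map_csInf_of_continuousAt (by fun_prop) (hS.image B) hB, Set.image_image]

end Infimum

section Hinge

/-- The positive part of the margin deficit of a sample `z = ((u, h), y)` for the coefficients
`c` of `u` and `h`; `F_κ(c₁, c₂)²` is its second moment. -/
def hinge (κ : ℝ) (c : ℝ × ℝ) (z : (ℝ × ℝ) × ℝ) : ℝ :=
  max (κ - z.2 * (c.1 * z.1.1 + c.2 * z.1.2)) 0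

variable {κ : ℝ} {c : ℝ × ℝ}

lemma measurable_hinge : Measurable (hinge κ c) := by
  unfold hinge
  fun_prop

lemma abs_label_mul {y : ℝ} (hy : y = 1 ∨ y = -1) (t : ℝ) : |y * t| = |t| := by
  rcases hy with rfl | rfl <;> simp

lemma abs_hinge_le {y : ℝ} (x : ℝ × ℝ) (hy : y = 1 ∨ y = -1) :
    |hinge κ c (x, y)| ≤ |κ| + |c.1 * x.1| + |c.2 * x.2| := by
  rw [hinge, abs_of_nonneg (le_max_right _ _)]
  refine max_le ?_ (by positivity)
  calc κ - y * (c.1 * x.1 + c.2 * x.2) ≤ |κ| + |c.1 * x.1 + c.2 * x.2| :=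
        (le_abs_self _).trans ((abs_sub _ _).trans_eq (by rw [abs_label_mul hy]))
    _ ≤ |κ| + |c.1 * x.1| + |c.2 * x.2| := by
        rw [add_assoc]
        gcongr
        exact abs_add_le _ _

lemma memLp_fst_stdG {r : ENNReal} (hr : r ≠ ⊤) :
    MemLp (fun x : ℝ × ℝ => x.1) r (stdG.prod stdG) :=
  (memLp_id_gaussianReal' r hr).comp_fst stdG

lemma memLp_snd_stdG {r : ENNReal} (hr : r ≠ ⊤) :
    MemLp (fun x : ℝ × ℝ => x.2) r (stdG.prod stdG) :=
  (memLp_id_gaussianReal' r hr).comp_snd stdG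

lemma memLp_two_sq {α : Type*} [MeasurableSpace α] {μ : Measure α} {F : α → ℝ}
    (hF : MemLp F 4 μ) : MemLp (fun x => F x ^ 2) 2 μ := by
  refine (memLp_two_iff_integrable_sq (hF.aestronglyMeasurable.pow 2)).2 ?_
  refine (MemLp.integrable_norm_pow (p := 4) hF four_ne_zero).congr (ae_of_all _ fun x => ?_)
  simp only [Real.norm_eq_abs, Pi.pow_apply, ← pow_mul]
  exact Even.pow_abs ⟨2, rfl⟩ (F x)

lemma memLp_hinge_envelope (κ : ℝ) (c : ℝ × ℝ) :
    MemLp (fun x : ℝ × ℝ => (|κ| + |c.1 * x.1| + |c.2 * x.2|) ^ 2) 2 (stdG.prod stdG) :=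
  have h₁ := ((memLp_fst_stdG (r := 4) (by simp)).const_mul c.1).abs
  have h₂ := ((memLp_snd_stdG (r := 4) (by simp)).const_mul c.2).abs
  memLp_two_sq (((memLp_const |κ|).add h₁).add h₂)

lemma memLp_noise : MemLp (fun x : ℝ × ℝ => x.1 ^ 2 + x.2 ^ 2) 2 (stdG.prod stdG) :=
  (memLp_two_sq (memLp_fst_stdG (by simp))).add (memLp_two_sq (memLp_snd_stdG (by simp)))

lemma abs_hinge_sq_le (x : ℝ × ℝ) (y : ℝ) (hy : y = 1 ∨ y = -1) :
    |hinge κ c (x, y) ^ 2| ≤ (|κ| + |c.1 * x.1| + |c.2 * x.2|) ^ 2 := by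
  rw [abs_pow]
  exact pow_le_pow_left₀ (abs_nonneg _) (abs_hinge_le x hy) 2

lemma Fk_eq_sqrt_integral_hinge (f : C(ℝ, unitInterval)) (ρ κ : ℝ) (c : ℝ × ℝ) :
    Fk (fun u => f (ρ * u)) κ c.1 c.2 = √(∫ z, hinge κ c z ^ 2 ∂sampleLaw f ρ) := by
  rw [integral_sampleLaw_eq_integral_neg (measurable_hinge.pow_const 2) abs_hinge_sq_le
    ((memLp_hinge_envelope κ c).integrable one_le_two), Fk]
  congr! 8 with u h
  · simp only [hinge]; ring_nf
  · simp only [hinge]; ring_nf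

lemma sq_linear_combination_le (c x : ℝ × ℝ) :
    (c.1 * x.1 + c.2 * x.2) ^ 2 ≤ 2 * ‖c‖ ^ 2 * (x.1 ^ 2 + x.2 ^ 2) := by
  have h₁ : c.1 ^ 2 ≤ ‖c‖ ^ 2 := sq_le_sq' (neg_le_of_abs_le (norm_fst_le c))
    (le_of_abs_le (norm_fst_le c))
  have h₂ : c.2 ^ 2 ≤ ‖c‖ ^ 2 := sq_le_sq' (neg_le_of_abs_le (norm_snd_le c))
    (le_of_abs_le (norm_snd_le c))
  calc (c.1 * x.1 + c.2 * x.2) ^ 2 ≤ (c.1 ^ 2 + c.2 ^ 2) * (x.1 ^ 2 + x.2 ^ 2) := by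
        linarith [sq_nonneg (c.1 * x.2 - c.2 * x.1)]
    _ ≤ 2 * ‖c‖ ^ 2 * (x.1 ^ 2 + x.2 ^ 2) := by gcongr; linarith

lemma abs_l2_hinge_sub_le {n : ℕ} {z : Fin n → (ℝ × ℝ) × ℝ}
    (hz : ∀ i, (z i).2 = 1 ∨ (z i).2 = -1) (c c' : ℝ × ℝ) :
    |l2 (fun i => hinge κ c (z i)) - l2 (fun i => hinge κ c' (z i))|
      ≤ √(2 * ∑ i, ((z i).1.1 ^ 2 + (z i).1.2 ^ 2)) * dist c c' := by
  refine (abs_l2_sub_l2_le _ _).trans ?_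
  rw [dist_eq_norm, ← Real.sqrt_sq (norm_nonneg (c - c')), ← Real.sqrt_mul (by positivity),
    Finset.mul_sum, Finset.sum_mul]
  refine Real.sqrt_le_sqrt (Finset.sum_le_sum fun i _ => ?_)
  have hdiff : |hinge κ c (z i) - hinge κ c' (z i)|
      ≤ |(c - c').1 * (z i).1.1 + (c - c').2 * (z i).1.2| := by
    refine (abs_max_sub_max_le_abs _ _ _).trans_eq ?_
    rw [sub_sub_sub_cancel_left, ← mul_sub, abs_label_mul (hz i), abs_sub_comm]
    congr 1
    simp only [Prod.fst_sub, Prod.snd_sub]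
    ring
  linarith [sq_le_sq.2 hdiff, sq_linear_combination_le (c - c') (z i).1]

end Hinge

section UniformLimit

variable {f : C(ℝ, unitInterval)} {p : ℕ → ℕ} {ρn : ℕ → ℝ} {ψ ρ : ℝ}

lemma tendsto_div_dim {Ω : ℕ → Type*} [∀ n, MeasurableSpace (Ω n)] {μ : ∀ n, Measure (Ω n)}
    {S : (Σ n, Ω n) → ℝ} {m : ℝ} (hψ : ψ ≠ 0)
    (hp : Tendsto (fun n => (p n : ℝ) / n) atTop (𝓝 ψ))
    (hS : Tendsto (fun q => S q / q.1) (highProb atTop μ) (𝓝 m)) :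
    Tendsto (fun q => S q / p q.1) (highProb atTop μ) (𝓝 (m / ψ)) := by
  refine (hS.div (hp.comp tendsto_fst_highProb) hψ).congr' ?_
  filter_upwards [tendsto_fst_highProb.eventually (eventually_ne_atTop 0)] with q hq
    using div_div_div_cancel_right₀ (Nat.cast_ne_zero.2 hq) _ _

lemma tendsto_average_samples_noise (hρ : Tendsto ρn atTop (𝓝 ρ)) :
    Tendsto (fun q : Σ n, Fin n → (ℝ × ℝ) × ℝ =>
        (∑ i, ((q.2 i).1.1 ^ 2 + (q.2 i).1.2 ^ 2)) / q.1)
      (highProb atTop fun n => Measure.pi fun _ => sampleLaw f (ρn n))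
      (𝓝 (∫ z, (z.1.1 ^ 2 + z.1.2 ^ 2) ∂sampleLaw f ρ)) :=
  tendsto_average_samples (φ := fun z => z.1.1 ^ 2 + z.1.2 ^ 2) (by fun_prop)
    (fun _ _ _ => (abs_of_nonneg (by positivity)).le) memLp_noise hρ

lemma eventually_label : ∀ᶠ q in highProb atTop fun n => Measure.pi fun _ : Fin n =>
    sampleLaw f (ρn n), ∀ i, (q.2 i).2 = 1 ∨ (q.2 i).2 = -1 :=
  eventually_highProb_of_ae fun n => ae_all_iff.2 fun i =>
    (measurePreserving_eval _ i).quasiMeasurePreserving.ae (sampleLaw_label f (ρn n))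

theorem tendstoUniformlyOn_l2_hinge (hψ : 0 < ψ)
    (hp : Tendsto (fun n => (p n : ℝ) / n) atTop (𝓝 ψ)) (hρ : Tendsto ρn atTop (𝓝 ρ))
    (κ : ℝ) {K : Set (ℝ × ℝ)} (hK : IsCompact K) :
    TendstoUniformlyOn
      (fun (q : Σ n, Fin n → (ℝ × ℝ) × ℝ) c =>
        (√(p q.1 : ℝ))⁻¹ * l2 fun i => hinge κ c (q.2 i))
      (fun c => (√ψ)⁻¹ * Fk (fun u => f (ρ * u)) κ c.1 c.2)
      (highProb atTop fun n => Measure.pi fun _ => sampleLaw f (ρn n)) K := by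
  set m := (∫ z, (z.1.1 ^ 2 + z.1.2 ^ 2) ∂sampleLaw f ρ) / ψ
  refine tendstoUniformlyOn_of_eventually_lipschitzOnWith (A := (√(2 * (m + 1))).toNNReal) hK
    (fun c _ => ?_) ?_
  · have hlim := (tendsto_div_dim hψ.ne' hp (tendsto_average_samples (f := f)
      (measurable_hinge.pow_const 2) abs_hinge_sq_le (memLp_hinge_envelope κ c) hρ)).sqrt
    simpa only [Fk_eq_sqrt_integral_hinge, l2, ← div_eq_inv_mul, ← Real.sqrt_div' _ hψ.le,
      ← Real.sqrt_div' _ (Nat.cast_nonneg _)] using hlim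
  · have hnoise := tendsto_div_dim hψ.ne' hp (tendsto_average_samples_noise (f := f) hρ)
    filter_upwards [eventually_label, hnoise.eventually_le_const (lt_add_one m)] with q hq hm
    refine LipschitzOnWith.of_dist_le_mul fun c _ c' _ => ?_
    rw [Real.coe_toNNReal _ (by positivity), Real.dist_eq, ← mul_sub, abs_mul,
      abs_of_nonneg (by positivity)]
    calc _ ≤ (√(p q.1 : ℝ))⁻¹ * (√(2 * ∑ i, ((q.2 i).1.1 ^ 2 + (q.2 i).1.2 ^ 2)) * dist c c') := by
          gcongr
          exact abs_l2_hinge_sub_le hq c c'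
      _ = √(2 * ((∑ i, ((q.2 i).1.1 ^ 2 + (q.2 i).1.2 ^ 2)) / p q.1)) * dist c c' := by
          rw [← mul_assoc, ← div_eq_inv_mul, ← Real.sqrt_div' _ (Nat.cast_nonneg _), mul_div_assoc]
      _ ≤ √(2 * (m + 1)) * dist c c' := by gcongr

end UniformLimit

section Comparison

variable {n p : ℕ} {κ ψ M ε : ℝ} {fρ : ℝ → ℝ} {Λ w θ g : Fin p → ℝ} {Θ : Set (Fin p → ℝ)}
  {h u y : Fin n → ℝ}

lemma exists_sq_add_sq_le_average (hn : 0 < n) (u h : Fin n → ℝ) :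
    ∃ i, u i ^ 2 + h i ^ 2 ≤ (∑ i, (u i ^ 2 + h i ^ 2)) / n := by
  have : Nonempty (Fin n) := ⟨⟨0, hn⟩⟩
  obtain ⟨i, -, hi⟩ := Finset.exists_le_of_sum_le (f := fun i => u i ^ 2 + h i ^ 2)
    (g := fun _ => (∑ i, (u i ^ 2 + h i ^ 2)) / n) Finset.univ_nonempty (by
      simp [mul_div_cancel₀, hn.ne'])
  exact ⟨i, hi⟩

lemma abs_sSup_lamSet_sub_hinge_le (hn : 0 < n) (hy : ∀ i, y i = 1 ∨ y i = -1) {s : ℝ}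
    (hs : 0 ≤ s) (b : ℝ) (c : ℝ × ℝ) :
    |sSup ((fun lam => s * ((∑ i, lam i * (κ * y i - c.1 * u i - c.2 * h i)) + l2 lam * b))
          '' lamSet n y)
        - max (s * l2 (fun i => hinge κ c ((u i, h i), y i)) + s * b) 0|
      ≤ s * (|κ| + ‖c‖ * √(2 * ((∑ i, (u i ^ 2 + h i ^ 2)) / n))) := by
  obtain ⟨i₀, hi₀⟩ := exists_sq_add_sq_le_average hn u h
  have hmargin : ∀ i, y i * (κ * y i - c.1 * u i - c.2 * h i)
      = κ - y i * (c.1 * u i + c.2 * h i) := fun i => by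
    linear_combination κ * mul_self_eq_one_iff.2 (hy i)
  have hlin : |y i₀ * (c.1 * u i₀ + c.2 * h i₀)|
      ≤ ‖c‖ * √(2 * ((∑ i, (u i ^ 2 + h i ^ 2)) / n)) := by
    rw [abs_label_mul (hy i₀), ← Real.sqrt_sq (norm_nonneg c), ← Real.sqrt_mul (sq_nonneg _)]
    refine Real.abs_le_sqrt ((sq_linear_combination_le c (u i₀, h i₀)).trans ?_)
    nlinarith [mul_le_mul_of_nonneg_left hi₀ (sq_nonneg ‖c‖)]
  have hsup := abs_sSup_lamSet_sub_le (a := fun i => κ * y i - c.1 * u i - c.2 * h i) (b := b)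
    hy hs (D := |κ| + ‖c‖ * √(2 * ((∑ i, (u i ^ 2 + h i ^ 2)) / n))) (by positivity) (i₀ := i₀) (by
      rw [hmargin]
      linarith [neg_abs_le κ, le_of_abs_le hlin])
  simp only [hmargin, mul_max_of_nonneg _ _ hs, mul_add s (l2 _), mul_zero] at hsup
  exact hsup

/-- The coefficients `(⟨Λ^{1/2}w, θ⟩, ‖Π_{w⊥}Λ^{1/2}θ‖₂)` through which `θ` enters both `ξ⁽¹⁾` and
`ξ⁽²⁾`, apart from the Gaussian term `gᵀΠ_{w⊥}Λ^{1/2}θ`. -/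
def coeffs (Λ w θ : Fin p → ℝ) : ℝ × ℝ :=
  (∑ j, √(Λ j) * w j * θ j, l2 (projv w fun j => √(Λ j) * θ j))

/-- The function of `θ` minimised in `ξ⁽¹⁾`. -/
def xi1Objective (κ : ℝ) (Λ w g : Fin p → ℝ) (h u y : Fin n → ℝ) (θ : Fin p → ℝ) : ℝ :=
  sSup ((fun lam => (√(p : ℝ))⁻¹ *
    ((∑ i, lam i * (κ * y i - (coeffs Λ w θ).1 * u i - (coeffs Λ w θ).2 * h i))
      + l2 lam * ∑ j, g j * projv w (fun j' => √(Λ j') * θ j') j)) '' lamSet n y)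

/-- The function of `θ` minimised in `ξ⁽²⁾`. -/
def xi2Objective (ψ κ : ℝ) (fρ : ℝ → ℝ) (Λ w g θ : Fin p → ℝ) : ℝ :=
  (√ψ)⁻¹ * Fk fρ κ (coeffs Λ w θ).1 (coeffs Λ w θ).2
    + (√(p : ℝ))⁻¹ * ∑ j, g j * projv w (fun j' => √(Λ j') * θ j') j

lemma xi1_eq_sInf_image : xi1 n p κ Λ w Θ g h u y = sInf (xi1Objective κ Λ w g h u y '' Θ) := rfl

lemma xi2_eq_sInf_image : xi2 p ψ κ fρ Λ w Θ g = sInf (xi2Objective ψ κ fρ Λ w g '' Θ) := rfl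

lemma norm_coeffs_le (hw : l2 w = 1) : ‖coeffs Λ w θ‖ ≤ l2 fun j => √(Λ j) * θ j := by
  refine norm_prod_le_iff.2 ⟨?_, ?_⟩
  · have := abs_sum_mul_le_l2_mul_l2 w fun j => √(Λ j) * θ j
    simpa only [coeffs, Real.norm_eq_abs, hw, one_mul, mul_left_comm (w _), mul_assoc] using this
  · rw [coeffs, Real.norm_of_nonneg (l2_nonneg _)]
    exact l2_projv_le hw _

lemma bddBelow_xi2Objective (hw : l2 w = 1) (hM : ∀ θ ∈ Θ, l2 (fun j => √(Λ j) * θ j) ≤ M) :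
    BddBelow (xi2Objective ψ κ fρ Λ w g '' Θ) := by
  refine ⟨(√(p : ℝ))⁻¹ * -(l2 g * M), ?_⟩
  rintro _ ⟨θ, hθ, rfl⟩
  have hF : 0 ≤ (√ψ)⁻¹ * Fk fρ κ (coeffs Λ w θ).1 (coeffs Λ w θ).2 :=
    mul_nonneg (by positivity) (Real.sqrt_nonneg _)
  refine le_add_of_nonneg_of_le hF ?_
  gcongr
  calc -(l2 g * M) ≤ -(l2 g * l2 (projv w fun j' => √(Λ j') * θ j')) := by
        gcongr
        exacts [l2_nonneg g, (l2_projv_le hw _).trans (hM θ hθ)]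
    _ ≤ _ := neg_le_of_abs_le (abs_sum_mul_le_l2_mul_l2 _ _)

lemma abs_xi1Objective_sub_max_xi2Objective_le (hw : l2 w = 1)
    (hM : l2 (fun j => √(Λ j) * θ j) ≤ M) (hn : 0 < n) (hy : ∀ i, y i = 1 ∨ y i = -1)
    (hunif : ∀ c ∈ Metric.closedBall (0 : ℝ × ℝ) M,
      |(√(p : ℝ))⁻¹ * l2 (fun i => hinge κ c ((u i, h i), y i)) - (√ψ)⁻¹ * Fk fρ κ c.1 c.2| ≤ ε) :
    |xi1Objective κ Λ w g h u y θ - max (xi2Objective ψ κ fρ Λ w g θ) 0|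
      ≤ (√(p : ℝ))⁻¹ * (|κ| + M * √(2 * ((∑ i, (u i ^ 2 + h i ^ 2)) / n))) + ε := by
  have hc : ‖coeffs Λ w θ‖ ≤ M := (norm_coeffs_le hw).trans hM
  refine (abs_sub_le _ _ _).trans (add_le_add ((abs_sSup_lamSet_sub_hinge_le hn hy
    (by positivity) _ (coeffs Λ w θ)).trans ?_) ?_)
  · gcongr
  · refine (abs_max_sub_max_le_abs _ _ _).trans ?_
    rw [xi2Objective, add_sub_add_right_eq_sub]
    exact hunif _ (mem_closedBall_zero_iff.2 hc)

theorem abs_xi1_sub_max_xi2_le (hw : l2 w = 1) (hΘ : Θ.Nonempty)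
    (hM : ∀ θ ∈ Θ, l2 (fun j => √(Λ j) * θ j) ≤ M) (hn : 0 < n)
    (hy : ∀ i, y i = 1 ∨ y i = -1)
    (hunif : ∀ c ∈ Metric.closedBall (0 : ℝ × ℝ) M,
      |(√(p : ℝ))⁻¹ * l2 (fun i => hinge κ c ((u i, h i), y i)) - (√ψ)⁻¹ * Fk fρ κ c.1 c.2| ≤ ε) :
    |xi1 n p κ Λ w Θ g h u y - max (xi2 p ψ κ fρ Λ w Θ g) 0|
      ≤ (√(p : ℝ))⁻¹ * (|κ| + M * √(2 * ((∑ i, (u i ^ 2 + h i ^ 2)) / n))) + ε := by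
  rw [xi1_eq_sInf_image, xi2_eq_sInf_image, max_sInf_image hΘ (bddBelow_xi2Objective hw hM)]
  refine abs_sInf_image_sub_le hΘ ⟨0, ?_⟩ fun θ hθ =>
    abs_xi1Objective_sub_max_xi2Objective_le hw (hM θ hθ) hn hy hunif
  rintro _ ⟨θ, -, rfl⟩
  exact le_max_right _ _

end Comparison

section Convergence

variable {f : C(ℝ, unitInterval)} {p : ℕ → ℕ} {ρn : ℕ → ℝ} {ψ ρ : ℝ}

lemma tendsto_inv_sqrt_dim (hψ : 0 < ψ) (hp : Tendsto (fun n => (p n : ℝ) / n) atTop (𝓝 ψ)) :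
    Tendsto (fun n => (√(p n : ℝ))⁻¹) atTop (𝓝 0) := by
  have hdim : Tendsto (fun n => (p n : ℝ)) atTop atTop := by
    refine (hp.pos_mul_atTop hψ tendsto_natCast_atTop_atTop).congr' ?_
    filter_upwards [eventually_ne_atTop 0] with n hn
      using div_mul_cancel₀ _ (Nat.cast_ne_zero.2 hn)
  exact tendsto_inv_atTop_zero.comp (Real.tendsto_sqrt_atTop.comp hdim)

lemma tendsto_inv_sqrt_dim_mul_noise (hψ : 0 < ψ)
    (hp : Tendsto (fun n => (p n : ℝ) / n) atTop (𝓝 ψ)) (hρ : Tendsto ρn atTop (𝓝 ρ)) (a M : ℝ) :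
    Tendsto (fun q : Σ n, Fin n → (ℝ × ℝ) × ℝ => (√(p q.1 : ℝ))⁻¹ *
        (a + M * √(2 * ((∑ i, ((q.2 i).1.1 ^ 2 + (q.2 i).1.2 ^ 2)) / q.1))))
      (highProb atTop fun n => Measure.pi fun _ => sampleLaw f (ρn n)) (𝓝 0) := by
  have hnoise := tendsto_average_samples_noise (f := f) hρ
  simpa only [Function.comp_apply, zero_mul] using
    ((tendsto_inv_sqrt_dim hψ hp).comp tendsto_fst_highProb).mul
      (((hnoise.const_mul 2).sqrt.const_mul M).const_add a)

lemma tendsto_samples (p : ℕ → ℕ) :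
    Tendsto (Sigma.map id fun _ => samples)
      (highProb atTop fun n => mu1 n (p n) (fun x => f x) (ρn n))
      (highProb atTop fun n => Measure.pi fun _ : Fin n => sampleLaw f (ρn n)) := by
  simpa only [map_samples_mu1] using tendsto_highProb_map (l := atTop)
    (μ := fun n => mu1 n (p n) (fun x => f x) (ρn n))
    fun n => (measurable_samples n (p n)).aemeasurable

theorem tendsto_xi1_sub_max_xi2 (hψ : 0 < ψ)
    (hp : Tendsto (fun n => (p n : ℝ) / n) atTop (𝓝 ψ)) (hρ : Tendsto ρn atTop (𝓝 ρ)) (κ : ℝ)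
    {Λ w : (n : ℕ) → Fin (p n) → ℝ} {Θ : (n : ℕ) → Set (Fin (p n) → ℝ)} {M : ℝ}
    (hw : ∀ n, l2 (w n) = 1) (hΘ : ∀ n, (Θ n).Nonempty)
    (hM : ∀ n, ∀ θ ∈ Θ n, l2 (fun j => √(Λ n j) * θ j) ≤ M) :
    Tendsto (fun q : Σ n, (Fin (p n) → ℝ) × (Fin n → ℝ) × (Fin n → ℝ) × (Fin n → ℝ) =>
        xi1 q.1 (p q.1) κ (Λ q.1) (w q.1) (Θ q.1) q.2.1 q.2.2.1 q.2.2.2.1 q.2.2.2.2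
          - max (xi2 (p q.1) ψ κ (fun u => f (ρ * u)) (Λ q.1) (w q.1) (Θ q.1) q.2.1) 0)
      (highProb atTop fun n => mu1 n (p n) (fun x => f x) (ρn n)) (𝓝 0) := by
  have hsamples := tendsto_samples (f := f) (ρn := ρn) p
  have herr := (tendsto_inv_sqrt_dim_mul_noise (f := f) hψ hp hρ |κ| M).comp hsamples
  have hunif := Metric.tendstoUniformlyOn_iff.1
    (tendstoUniformlyOn_l2_hinge (f := f) hψ hp hρ κ (isCompact_closedBall 0 M))
  refine Metric.tendsto_nhds.2 fun ε hε => ?_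
  filter_upwards [hsamples.eventually eventually_label, herr.eventually_lt_const (half_pos hε),
    hsamples.eventually (hunif (ε / 2) (half_pos hε)),
    tendsto_fst_highProb.eventually (eventually_gt_atTop 0)] with q hy herr hunif hn
  rw [Real.dist_0_eq_abs]
  calc _ ≤ _ := abs_xi1_sub_max_xi2_le (hw q.1) (hΘ q.1) (hM q.1) hn hy fun c hc => by
        rw [abs_sub_comm]
        exact (hunif c hc).le
    _ < ε / 2 + ε / 2 := by gcongr; exact herr
    _ = ε := add_halves ε

end Convergence

theorem statement_11_general (ψ : ℝ) (hψ : 0 < ψ) (κ : ℝ)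
    (f : ℝ → ℝ) (hf : Continuous f) (hf01 : ∀ x, f x ∈ Set.Icc (0 : ℝ) 1)
    (p : ℕ → ℕ) (hp : Tendsto (fun n => (p n : ℝ) / (n : ℝ)) atTop (𝓝 ψ))
    (C : ℝ) (Λ : (n : ℕ) → Fin (p n) → ℝ) (hΛ : ∀ n j, Λ n j ∈ Set.Icc 0 C)
    (ρn : ℕ → ℝ) (ρ : ℝ) (hρlim : Tendsto ρn atTop (𝓝 ρ))
    (w : (n : ℕ) → Fin (p n) → ℝ) (hw : ∀ n, l2 (w n) = 1)
    (r : ℝ) (Θ : (n : ℕ) → Set (Fin (p n) → ℝ)) (hΘne : ∀ n, (Θ n).Nonempty)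
    (hΘsub : ∀ n, Θ n ⊆ {θ : Fin (p n) → ℝ | l2 θ ≤ r}) (ε : ℝ) (hε : 0 < ε) :
    Tendsto (fun n => mu1 n (p n) f (ρn n)
        {q | ε ≤ |xi1 n (p n) κ (Λ n) (w n) (Θ n) q.1 q.2.1 q.2.2.1 q.2.2.2
          - max (xi2 (p n) ψ κ (fun x => f (ρ * x)) (Λ n) (w n) (Θ n) q.1) 0|})
      atTop (𝓝 0) := by
  have hM : ∀ n, ∀ θ ∈ Θ n, l2 (fun j => √(Λ n j) * θ j) ≤ √C * r := fun n θ hθ =>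
    (l2_sqrt_mul_le (fun j => (hΛ n j).2) θ).trans
      (mul_le_mul_of_nonneg_left (hΘsub n hθ) (Real.sqrt_nonneg C))
  have hlim := tendsto_xi1_sub_max_xi2
    (f := ⟨fun x => ⟨f x, hf01 x⟩, hf.subtype_mk hf01⟩) hψ hp hρlim κ hw hΘne hM
  simpa only [eventually_highProb, ContinuousMap.coe_mk, Real.dist_0_eq_abs, not_lt] using
    Metric.tendsto_nhds.1 hlim ε hε

/-- For every sequence of nonempty compact sets `Θₙ` contained in the unit ball,
`|ξ⁽¹⁾_{n,ψ,κ}(Θₙ) − (ξ⁽²⁾_{n,ψ,κ}(Θₙ))₊| → 0` in probability as `n → ∞`, `p/n → ψ`;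
in particular this holds for the unit ball itself. -/
theorem statement_11 (ψ : ℝ) (hψ : 0 < ψ) (κ : ℝ) (hκ : 0 ≤ κ)
    (f : ℝ → ℝ) (hf : Continuous f) (hf01 : ∀ x, f x ∈ Set.Icc (0:ℝ) 1)
    (p : ℕ → ℕ) (hp : Tendsto (fun n => (p n : ℝ) / (n : ℝ)) atTop (nhds ψ))
    (c C : ℝ) (hc : 0 < c) (hcC : c ≤ C)
    (Λ : (n : ℕ) → Fin (p n) → ℝ) (hΛ : ∀ n j, Λ n j ∈ Set.Icc c C)
    (θs : (n : ℕ) → Fin (p n) → ℝ)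
    (ρn : ℕ → ℝ) (hρn : ∀ n, ρn n = l2 (fun j => Real.sqrt (Λ n j) * θs n j))
    (hρnpos : ∀ n, 0 < ρn n)
    (ρ : ℝ) (hρ : 0 < ρ) (hρlim : Tendsto ρn atTop (nhds ρ))
    (w : (n : ℕ) → Fin (p n) → ℝ)
    (hw : ∀ n j, w n j = Real.sqrt (Λ n j) * θs n j / ρn n)
    (Θ : (n : ℕ) → Set (Fin (p n) → ℝ))
    (hΘc : ∀ n, IsCompact (Θ n)) (hΘne : ∀ n, (Θ n).Nonempty)
    (hΘsub : ∀ n, Θ n ⊆ {θ : Fin (p n) → ℝ | l2 θ ≤ 1}) :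
    (∀ ε : ℝ, 0 < ε →
      Tendsto (fun n => mu1 n (p n) f (ρn n)
          {q | ε ≤ |xi1 n (p n) κ (Λ n) (w n) (Θ n) q.1 q.2.1 q.2.2.1 q.2.2.2
            - max (xi2 (p n) ψ κ (fun x => f (ρ * x)) (Λ n) (w n) (Θ n) q.1) 0|})
        atTop (nhds 0))
    ∧ (∀ ε : ℝ, 0 < ε →
      Tendsto (fun n => mu1 n (p n) f (ρn n)
          {q | ε ≤ |xi1 n (p n) κ (Λ n) (w n) {θ : Fin (p n) → ℝ | l2 θ ≤ 1}
              q.1 q.2.1 q.2.2.1 q.2.2.2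
            - max (xi2 (p n) ψ κ (fun x => f (ρ * x)) (Λ n) (w n)
                {θ : Fin (p n) → ℝ | l2 θ ≤ 1} q.1) 0|})
        atTop (nhds 0)) := by
  have hw1 : ∀ n, l2 (w n) = 1 := fun n => by
    rw [funext (hw n)]
    exact l2_div_eq_one (hρn n) (hρnpos n)
  have hΛ0 : ∀ n j, Λ n j ∈ Set.Icc 0 C := fun n j => Set.Icc_subset_Icc_left hc.le (hΛ n j)
  exact ⟨statement_11_general ψ hψ κ f hf hf01 p hp C Λ hΛ0 ρn ρ hρlim w hw1 1 Θ hΘne hΘsub,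
    statement_11_general ψ hψ κ f hf hf01 p hp C Λ hΛ0 ρn ρ hρlim w hw1 1 _
      (fun n => ⟨0, by simp [l2]⟩) fun n => subset_rfl⟩

end MaxMargin
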